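/- (Theorem 2.11: tensorization of T_1 by the martingale method.) Let (E,d) be a Polish metric space and ℙ a probability measure on E^n such that P_i(·|x^{i-1}) satisfies T_1(C) for all i and x^{i-1}. Assume condition (C1'): there is a constant S > 0 such that for every bounded function f(x_{k+1},…,x_n) with ‖f‖_{Lip(d_{l_1})} ≤ 1, every x ∈ E^n and every y_k ∈ E, |𝔼_ℙ(f(X_{k+1},…,X_n)|X^k = x^k) − 𝔼_ℙ(f(X_{k+1},…,X_n)|X^k = (x^{k-1},y_k))| ≤ S·d(x_k,y_k). Then for every F : E^n → ℝ such that |F(…,x_k,…) − F(…,y_k,…)| ≤ α·d(x_k,y_k) in each coordinate k with the others fixed, 𝔼_ℙ exp(λ(F − 𝔼_ℙ F)) ≤ exp( C λ² (1+S)² α² n / 2 ) for all λ ∈ ℝ; equivalently, ℙ satisfies T_1(C_n) on (E^n, d_{l_1}) with C_n = nC(1+S)². -/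

import Mathlib

open MeasureTheory ProbabilityTheory ENNReal

noncomputable section

/-- `π` is a coupling of `μ` and `ν`. -/
def IsCoupling {E F : Type*} [MeasurableSpace E] [MeasurableSpace F]
    (π : Measure (E × F)) (μ : Measure E) (ν : Measure F) : Prop :=
  π.map Prod.fst = μ ∧ π.map Prod.snd = ν

/-- The `L^p`-Wasserstein distance associated to the cost function `d`, valued in `ℝ≥0∞`. -/
def wassersteinDist {E : Type*} [MeasurableSpace E] (p : ℝ) (d : E → E → ℝ)
    (μ ν : Measure E) : ℝ≥0∞ :=
  ⨅ (π : Measure (E × E)) (_ : IsCoupling π μ ν),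
    (∫⁻ z, ENNReal.ofReal (d z.1 z.2) ^ p ∂π) ^ (1 / p)

/-- The `L^p`-Wasserstein distance for an extended (`ℝ≥0∞`-valued) pseudo-metric `d`. -/
def wassersteinDistE {E : Type*} [MeasurableSpace E] (p : ℝ) (d : E → E → ℝ≥0∞)
    (μ ν : Measure E) : ℝ≥0∞ :=
  ⨅ (π : Measure (E × E)) (_ : IsCoupling π μ ν),
    (∫⁻ z, d z.1 z.2 ^ p ∂π) ^ (1 / p)

open Classical in
/-- Relative entropy (Kullback information) `H(ν | μ)`, valued in `ℝ≥0∞`. -/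
def relEntropy {E : Type*} [MeasurableSpace E] (ν μ : Measure E) : ℝ≥0∞ :=
  if ν ≪ μ ∧ Integrable (fun x => Real.log ((ν.rnDeriv μ x).toReal)) ν then
    ENNReal.ofReal (∫ x, Real.log ((ν.rnDeriv μ x).toReal) ∂ν)
  else ∞

/-- The transportation cost-information inequality `T_p(C)` for `μ` on `(E, d)`:
`W_p(μ, ν) ≤ √(2 C H(ν|μ))` for every probability measure `ν`, written in the equivalent
squared form `W_p(μ,ν)² ≤ 2C·H(ν|μ)` in `ℝ≥0∞`. -/
def TpIneq {E : Type*} [MeasurableSpace E] (p : ℝ) (d : E → E → ℝ) (C : ℝ)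
    (μ : Measure E) : Prop :=
  ∀ ν : Measure E, IsProbabilityMeasure ν →
    wassersteinDist p d μ ν ^ 2 ≤ ENNReal.ofReal (2 * C) * relEntropy ν μ

/-- The transportation cost-information inequality `T_p(C)` for an extended pseudo-metric. -/
def TpIneqE {E : Type*} [MeasurableSpace E] (p : ℝ) (d : E → E → ℝ≥0∞) (C : ℝ)
    (μ : Measure E) : Prop :=
  ∀ ν : Measure E, IsProbabilityMeasure ν →
    wassersteinDistE p d μ ν ^ 2 ≤ ENNReal.ofReal (2 * C) * relEntropy ν μ

/-- The law on `E^n` of the (in general non-homogeneous, non-Markovian) random sequence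
determined by the successive regular conditional laws `K i : (Fin i → E) → Measure E`
of the `(i+1)`-th coordinate given the first `i` coordinates. -/
def chainMeasure {E : Type*} [MeasurableSpace E]
    (K : (i : ℕ) → (Fin i → E) → Measure E) : (n : ℕ) → Measure (Fin n → E)
  | 0 => Measure.dirac (fun i => i.elim0)
  | n + 1 => (chainMeasure K n).bind fun x => (K n x).map (Fin.snoc x)

/-- The conditional law of the next `m` coordinates given that the first `k`
coordinates equal `x`. -/
def futureChain {E : Type*} [MeasurableSpace E]
    (K : (i : ℕ) → (Fin i → E) → Measure E) (k : ℕ) (x : Fin k → E)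
    (m : ℕ) : Measure (Fin m → E) :=
  chainMeasure (fun i y => K (k + i) (Fin.append x y)) m

/-!
Writing a function of the chain as a sum of martingale differences, condition (C1') makes the
conditional mean given the first `k` coordinates `α (1 + S)`-Lipschitz in the `k`-th one: `α` comes
from the function and `α S` from the conditional law of the future. By `T₁(C)` for the conditional
laws, in the Laplace-transform form of Bobkov and Götze, integrating out one coordinate multiplies
the exponential moment by at most `exp (C λ² α² (1 + S)² / 2)`.

Conversely, the Laplace bound on `E^n` gives back `T₁`: by the Donsker–Varadhan formula it bounds
the difference of the means of a 1-Lipschitz function under two laws by the entropy, and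
Kantorovich–Rubinstein duality turns this into a bound on the transport cost. Duality is proved by
rounding to finitely many points and separating convex sets there.
-/

section BoundedFunctions

variable {X : Type*} [MeasurableSpace X] {f : X → ℝ} {M : ℝ}

lemma integrable_of_forall_abs_le {μ : Measure X} [IsFiniteMeasure μ] (hf : Measurable f)
    (hM : ∀ x, |f x| ≤ M) : Integrable f μ :=
  .of_bound hf.aestronglyMeasurable M (ae_of_all _ hM)

lemma abs_exp_le_exp_of_abs_le {a : ℝ} (ha : |a| ≤ M) : |Real.exp a| ≤ Real.exp M := by
  rw [Real.abs_exp]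
  exact Real.exp_le_exp.2 (le_of_abs_le ha)

lemma integrable_exp_of_forall_abs_le {μ : Measure X} [IsFiniteMeasure μ] (hf : Measurable f)
    (hM : ∀ x, |f x| ≤ M) : Integrable (fun x => Real.exp (f x)) μ :=
  integrable_of_forall_abs_le hf.exp fun x => abs_exp_le_exp_of_abs_le (hM x)

lemma abs_integral_le_of_forall_abs_le {μ : Measure X} [IsProbabilityMeasure μ]
    (hM : ∀ x, |f x| ≤ M) : |∫ x, f x ∂μ| ≤ M := by
  simpa using norm_integral_le_of_norm_le_const (μ := μ) (f := f) (ae_of_all _ hM)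

lemma ofReal_integral_le_lintegral_ofReal {μ : Measure X} :
    ENNReal.ofReal (∫ x, f x ∂μ) ≤ ∫⁻ x, ENNReal.ofReal (f x) ∂μ := by
  by_cases hf : Integrable f μ
  · rw [integral_eq_lintegral_pos_part_sub_lintegral_neg_part hf]
    exact (ENNReal.ofReal_le_ofReal (sub_le_self _ ENNReal.toReal_nonneg)).trans
      ENNReal.ofReal_toReal_le
  · simp [integral_undef hf]

end BoundedFunctions

section Transport

variable {X : Type*} [MeasurableSpace X]

lemma IsCoupling.isProbabilityMeasure {Y : Type*} [MeasurableSpace Y] {π : Measure (X × Y)}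
    {μ : Measure X} {ν : Measure Y} [hμ : IsProbabilityMeasure μ] (hπ : IsCoupling π μ ν) :
    IsProbabilityMeasure π := by
  rw [← hπ.1] at hμ
  exact Measure.isProbabilityMeasure_of_map Prod.fst

lemma IsCoupling.lintegral_fst {Y : Type*} [MeasurableSpace Y] {π : Measure (X × Y)}
    {μ : Measure X} {ν : Measure Y} (hπ : IsCoupling π μ ν) {g : X → ℝ≥0∞} (hg : Measurable g) :
    ∫⁻ z, g z.1 ∂π = ∫⁻ x, g x ∂μ := by
  rw [← hπ.1, lintegral_map hg measurable_fst]

lemma IsCoupling.lintegral_snd {Y : Type*} [MeasurableSpace Y] {π : Measure (X × Y)}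
    {μ : Measure X} {ν : Measure Y} (hπ : IsCoupling π μ ν) {g : Y → ℝ≥0∞} (hg : Measurable g) :
    ∫⁻ z, g z.2 ∂π = ∫⁻ y, g y ∂ν := by
  rw [← hπ.2, lintegral_map hg measurable_snd]

lemma wassersteinDist_one (d : X → X → ℝ) (μ ν : Measure X) :
    wassersteinDist 1 d μ ν =
      ⨅ (π : Measure (X × X)) (_ : IsCoupling π μ ν), ∫⁻ z, ENNReal.ofReal (d z.1 z.2) ∂π := by
  simp [wassersteinDist]

lemma IsCoupling.wassersteinDist_one_le {π : Measure (X × X)} {μ ν : Measure X}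
    (hπ : IsCoupling π μ ν) (d : X → X → ℝ) :
    wassersteinDist 1 d μ ν ≤ ∫⁻ z, ENNReal.ofReal (d z.1 z.2) ∂π :=
  (wassersteinDist_one d μ ν).trans_le (iInf₂_le π hπ)

lemma ofReal_integral_sub_le_wassersteinDist {d : X → X → ℝ} {μ ν : Measure X}
    [IsProbabilityMeasure μ] {f : X → ℝ} (hf : Measurable f) {M : ℝ} (hM : ∀ x, |f x| ≤ M)
    {L : ℝ} (hL : 0 < L) (hfL : ∀ x y, f y - f x ≤ L * d x y) :
    ENNReal.ofReal (∫ x, f x ∂ν - ∫ x, f x ∂μ) ≤ ENNReal.ofReal L * wassersteinDist 1 d μ ν := by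
  have hL₀ : ENNReal.ofReal L ≠ 0 := by simpa using hL
  simp only [wassersteinDist_one, ENNReal.mul_iInf_of_ne hL₀ ENNReal.ofReal_ne_top]
  refine le_iInf₂ fun π hπ => ?_
  have := hπ.isProbabilityMeasure
  have hfst : Integrable (fun z : X × X => f z.1) π :=
    integrable_of_forall_abs_le (by fun_prop) fun z => hM z.1
  have hsnd : Integrable (fun z : X × X => f z.2) π :=
    integrable_of_forall_abs_le (by fun_prop) fun z => hM z.2
  calc ENNReal.ofReal (∫ x, f x ∂ν - ∫ x, f x ∂μ)
      = ENNReal.ofReal (∫ z, (f z.2 - f z.1) ∂π) := by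
        rw [integral_sub hsnd hfst, ← hπ.1, ← hπ.2,
          integral_map measurable_fst.aemeasurable hf.aestronglyMeasurable,
          integral_map measurable_snd.aemeasurable hf.aestronglyMeasurable]
    _ ≤ ∫⁻ z, ENNReal.ofReal (f z.2 - f z.1) ∂π := ofReal_integral_le_lintegral_ofReal
    _ ≤ ∫⁻ z, ENNReal.ofReal L * ENNReal.ofReal (d z.1 z.2) ∂π := lintegral_mono fun z => by
        rw [← ENNReal.ofReal_mul hL.le]
        exact ENNReal.ofReal_le_ofReal (hfL _ _)
    _ = ENNReal.ofReal L * ∫⁻ z, ENNReal.ofReal (d z.1 z.2) ∂π :=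
        lintegral_const_mul' _ _ ENNReal.ofReal_ne_top

lemma relEntropy_of_ac {μ ν : Measure X} (hac : ν ≪ μ) (hint : Integrable (llr ν μ) ν) :
    relEntropy ν μ = ENNReal.ofReal (∫ x, llr ν μ x ∂ν) :=
  if_pos ⟨hac, hint⟩

lemma integral_llr_nonneg {μ ν : Measure X} [IsProbabilityMeasure μ] [IsProbabilityMeasure ν]
    (hac : ν ≪ μ) (hint : Integrable (llr ν μ) ν) : 0 ≤ ∫ x, llr ν μ x ∂ν := by
  simpa using InformationTheory.integral_llr_add_sub_measure_univ_nonneg hac hint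

lemma integrable_and_integral_llr_tilted {μ : Measure X} [IsProbabilityMeasure μ] {f : X → ℝ}
    (hf : Measurable f) {M : ℝ} (hM : ∀ x, |f x| ≤ M) :
    Integrable (llr (μ.tilted f) μ) (μ.tilted f) ∧
      ∫ x, llr (μ.tilted f) μ x ∂μ.tilted f =
        ∫ x, f x ∂μ.tilted f - Real.log (∫ x, Real.exp (f x) ∂μ) := by
  have hexp : Integrable (fun x => Real.exp (f x)) μ := integrable_exp_of_forall_abs_le hf hM
  have := isProbabilityMeasure_tilted hexp
  have hfν : Integrable f (μ.tilted f) := integrable_of_forall_abs_le hf hM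
  have hllr : llr (μ.tilted f) μ =ᵐ[μ.tilted f]
      fun x => f x - Real.log (∫ x, Real.exp (f x) ∂μ) :=
    (tilted_absolutelyContinuous μ f).ae_le (log_rnDeriv_tilted_left_self hexp)
  refine ⟨(hfν.sub (integrable_const _)).congr hllr.symm, ?_⟩
  rw [integral_congr_ae hllr, integral_sub hfν (integrable_const _)]
  simp

/-- The transport inequality is applied to the tilted measure `exp f • μ / ∫ exp f ∂μ`, whose
relative entropy is explicit. -/
lemma TpIneq.integral_exp_le {d : X → X → ℝ} {μ : Measure X} [IsProbabilityMeasure μ] {C : ℝ}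
    (hC : 0 ≤ C) (hT : TpIneq 1 d C μ) {f : X → ℝ} (hf : Measurable f) {M : ℝ}
    (hM : ∀ x, |f x| ≤ M) {L : ℝ} (hL : 0 < L) (hfL : ∀ x y, f y - f x ≤ L * d x y) :
    ∫ x, Real.exp (f x) ∂μ ≤ Real.exp (∫ x, f x ∂μ + C * L ^ 2 / 2) := by
  have hexp : Integrable (fun x => Real.exp (f x)) μ := integrable_exp_of_forall_abs_le hf hM
  have := isProbabilityMeasure_tilted hexp
  have hac := tilted_absolutelyContinuous μ f
  obtain ⟨hint, hllr⟩ := integrable_and_integral_llr_tilted (μ := μ) hf hM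
  have hH := integral_llr_nonneg hac hint
  set H := ∫ x, llr (μ.tilted f) μ x ∂μ.tilted f
  set D := ∫ x, f x ∂μ.tilted f - ∫ x, f x ∂μ
  suffices hDH : D ≤ H + C * L ^ 2 / 2 by
    rw [← Real.log_le_iff_le_exp (integral_exp_pos hexp)]
    linarith
  have hsq : ENNReal.ofReal D ^ 2 ≤ ENNReal.ofReal (L ^ 2 * (2 * C * H)) :=
    calc ENNReal.ofReal D ^ 2
        ≤ (ENNReal.ofReal L * wassersteinDist 1 d μ (μ.tilted f)) ^ 2 := by
          gcongr
          exact ofReal_integral_sub_le_wassersteinDist hf hM hL hfL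
      _ ≤ ENNReal.ofReal L ^ 2 * (ENNReal.ofReal (2 * C) * ENNReal.ofReal H) := by
          rw [mul_pow, ← relEntropy_of_ac hac hint]
          gcongr
          exact hT _ inferInstance
      _ = ENNReal.ofReal (L ^ 2 * (2 * C * H)) := by
          rw [← ENNReal.ofReal_pow hL.le, ← ENNReal.ofReal_mul (by positivity),
            ← ENNReal.ofReal_mul (by positivity)]
  rcases le_or_gt D 0 with hD | hD
  · exact hD.trans (by positivity)
  · rw [← ENNReal.ofReal_pow hD.le, ENNReal.ofReal_le_ofReal_iff (by positivity)] at hsq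
    refine le_of_sq_le_sq ?_ (by positivity)
    calc D ^ 2 ≤ L ^ 2 * (2 * C * H) := hsq
      _ ≤ (H + C * L ^ 2 / 2) ^ 2 := by linarith [sq_nonneg (H - C * L ^ 2 / 2)]

/-- One half of the Donsker–Varadhan formula: `ν` has nonnegative entropy with respect to `μ`
tilted by `f`. -/
lemma integral_le_integral_llr_add_log {μ ν : Measure X} [IsProbabilityMeasure μ]
    [IsProbabilityMeasure ν] (hac : ν ≪ μ) (hint : Integrable (llr ν μ) ν)
    {f : X → ℝ} (hf : Measurable f) {M : ℝ} (hM : ∀ x, |f x| ≤ M) :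
    ∫ x, f x ∂ν ≤ ∫ x, llr ν μ x ∂ν + Real.log (∫ x, Real.exp (f x) ∂μ) := by
  have hexp : Integrable (fun x => Real.exp (f x)) μ := integrable_exp_of_forall_abs_le hf hM
  have hfν : Integrable f ν := integrable_of_forall_abs_le hf hM
  have := isProbabilityMeasure_tilted hexp
  have hsplit := integral_llr_tilted_right hac hfν hexp hint
  have hnonneg := integral_llr_nonneg (hac.trans (absolutelyContinuous_tilted hexp))
    (integrable_llr_tilted_right hac hfν hint hexp)
  linarith

end Transport

section SubgaussianLipschitz

variable {X : Type*} [MeasurableSpace X]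

/-- Lipschitz functions are subgaussian under `μ`, with variance proxy `C * L ^ 2` for an
`L`-Lipschitz function: the Bobkov–Götze form of `T₁(C)`. Only bounded functions are tested, so that
all the integrals in the definition are meaningful. -/
def SubgaussianLipschitz (d : X → X → ℝ) (C : ℝ) (μ : Measure X) : Prop :=
  ∀ ⦃f : X → ℝ⦄ ⦃L : ℝ⦄, Measurable f → (∃ M, ∀ x, |f x| ≤ M) → 0 ≤ L →
    (∀ x y, |f x - f y| ≤ L * d x y) →
      ∫ x, Real.exp (f x) ∂μ ≤ Real.exp (∫ x, f x ∂μ + C * L ^ 2 / 2)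

lemma SubgaussianLipschitz.of_pos {d : X → X → ℝ} {C : ℝ} {μ : Measure X} [IsProbabilityMeasure μ]
    (h : ∀ ⦃f : X → ℝ⦄ ⦃L : ℝ⦄, Measurable f → (∃ M, ∀ x, |f x| ≤ M) → 0 < L →
      (∀ x y, |f x - f y| ≤ L * d x y) →
        ∫ x, Real.exp (f x) ∂μ ≤ Real.exp (∫ x, f x ∂μ + C * L ^ 2 / 2)) :
    SubgaussianLipschitz d C μ := by
  intro f L hf hM hL hfL
  rcases hL.eq_or_lt with rfl | hL
  · obtain ⟨x₀⟩ := nonempty_of_isProbabilityMeasure μ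
    have hconst : ∀ x, f x = f x₀ := fun x => by
      simpa [sub_eq_zero] using hfL x x₀
    simp [hconst]
  · exact h hf hM hL hfL

lemma TpIneq.subgaussianLipschitz {d : X → X → ℝ} {C : ℝ} {μ : Measure X} [IsProbabilityMeasure μ]
    (hC : 0 ≤ C) (hT : TpIneq 1 d C μ) : SubgaussianLipschitz d C μ :=
  .of_pos fun _ _ hf ⟨_, hM⟩ hL hfL => hT.integral_exp_le hC hf hM hL fun x y =>
    (le_abs_self _).trans ((abs_sub_comm _ _).trans_le (hfL x y))

lemma lintegral_ofReal_le_of_tendsto {μ : Measure X} {g : ℕ → X → ℝ} {f : X → ℝ}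
    {b : ℕ → ℝ} {B : ℝ} (hg : ∀ k, Measurable (g k)) (hgi : ∀ k, Integrable (g k) μ)
    (hg₀ : ∀ k x, 0 ≤ g k x)
    (hgf : ∀ x, Filter.Tendsto (fun k => g k x) Filter.atTop (nhds (f x)))
    (hgb : ∀ k, ∫ x, g k x ∂μ ≤ b k) (hb : Filter.Tendsto b Filter.atTop (nhds B)) :
    ∫⁻ x, ENNReal.ofReal (f x) ∂μ ≤ ENNReal.ofReal B :=
  calc ∫⁻ x, ENNReal.ofReal (f x) ∂μ
      = ∫⁻ x, Filter.liminf (fun k => ENNReal.ofReal (g k x)) Filter.atTop ∂μ :=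
        lintegral_congr fun x => (ENNReal.tendsto_ofReal (hgf x)).liminf_eq.symm
    _ ≤ Filter.liminf (fun k => ∫⁻ x, ENNReal.ofReal (g k x) ∂μ) Filter.atTop :=
        lintegral_liminf_le fun k => (hg k).ennreal_ofReal
    _ ≤ Filter.liminf (fun k => ENNReal.ofReal (b k)) Filter.atTop :=
        Filter.liminf_le_liminf <| .of_forall fun k => by
          rw [← ofReal_integral_eq_lintegral_ofReal (hgi k) (ae_of_all _ (hg₀ k))]
          exact ENNReal.ofReal_le_ofReal (hgb k)
    _ = ENNReal.ofReal B := (ENNReal.tendsto_ofReal hb).liminf_eq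

/-- Truncation of a real number to `[-M, M]`, used to approximate Lipschitz functions by bounded
ones. -/
def clamp (M t : ℝ) : ℝ := max (-M) (min t M)

lemma abs_clamp_le {M : ℝ} (hM : 0 ≤ M) (t : ℝ) : |clamp M t| ≤ M :=
  abs_le.2 ⟨le_max_left _ _, max_le (by linarith) (min_le_right _ _)⟩

lemma clamp_of_abs_le {M t : ℝ} (ht : |t| ≤ M) : clamp M t = t := by
  rw [clamp, min_eq_left (le_of_abs_le ht), max_eq_right (neg_le_of_abs_le ht)]

lemma clamp_mono (M : ℝ) : Monotone (clamp M) := fun _ _ h =>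
  max_le_max_left _ (min_le_min_right _ h)

lemma abs_clamp_sub_clamp_le (M s t : ℝ) : |clamp M s - clamp M t| ≤ |s - t| := by
  have hmax := abs_max_sub_max_le_max (-M) (min s M) (-M) (min t M)
  have hmin := abs_min_sub_min_le_max s M t M
  simp only [sub_self, abs_zero, abs_nonneg, sup_of_le_left, sup_of_le_right] at hmax hmin
  exact hmax.trans hmin

lemma abs_clamp_le_abs {M : ℝ} (hM : 0 ≤ M) (t : ℝ) : |clamp M t| ≤ |t| := by
  simpa [clamp, hM] using abs_clamp_sub_clamp_le M t 0

lemma measurable_clamp (M : ℝ) : Measurable (clamp M) :=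
  measurable_const.max (measurable_id.min measurable_const)

lemma tendsto_clamp_natCast (t : ℝ) :
    Filter.Tendsto (fun k : ℕ => clamp k t) Filter.atTop (nhds t) := by
  refine tendsto_const_nhds.congr' ?_
  filter_upwards [Filter.eventually_ge_atTop ⌈|t|⌉₊] with k hk
  exact (clamp_of_abs_le (Nat.ceil_le.1 hk)).symm

lemma integrable_of_forall_integral_abs_clamp_le {μ : Measure X} [IsFiniteMeasure μ] {f : X → ℝ}
    (hf : Measurable f) {B : ℝ} (hB : ∀ k : ℕ, ∫ x, |clamp k (f x)| ∂μ ≤ B) : Integrable f μ := by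
  have hmeas : ∀ k : ℕ, Measurable fun x => |clamp k (f x)| := fun k =>
    ((measurable_clamp k).comp hf).abs
  refine ⟨hf.aestronglyMeasurable, ?_⟩
  rw [hasFiniteIntegral_iff_norm]
  refine (lintegral_ofReal_le_of_tendsto hmeas (fun k => ?_) (fun k x => abs_nonneg _)
    (fun x => (tendsto_clamp_natCast (f x)).abs) hB tendsto_const_nhds).trans_lt
    ENNReal.ofReal_lt_top
  exact integrable_of_forall_abs_le (hmeas k) fun x =>
    (abs_abs _).trans_le (abs_clamp_le k.cast_nonneg _)

namespace SubgaussianLipschitz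

variable {d : X → X → ℝ} {C : ℝ} {μ : Measure X} [IsProbabilityMeasure μ] {f : X → ℝ} {L : ℝ}

/-- The Laplace bound for `-|f|` truncated says that the mean of `|f|` truncated exceeds
`-log ∫ exp (-|f|)` by at most `C * L ^ 2 / 2`. -/
lemma integrable (hμ : SubgaussianLipschitz d C μ) (hf : Measurable f) (hL : 0 ≤ L)
    (hfL : ∀ x y, |f x - f y| ≤ L * d x y) : Integrable f μ := by
  have hexp : Integrable (fun x => Real.exp (-|f x|)) μ :=
    integrable_of_forall_abs_le (M := 1) (by fun_prop) fun x => by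
      simp [Real.abs_exp]
  refine integrable_of_forall_integral_abs_clamp_le hf
    (B := C * L ^ 2 / 2 - Real.log (∫ x, Real.exp (-|f x|) ∂μ)) fun k => ?_
  have hmeas : Measurable fun x => -|clamp k (f x)| := ((measurable_clamp k).comp hf).abs.neg
  have hbdd : ∀ x, |(-|clamp k (f x)|)| ≤ k := fun x => by
    simpa using abs_clamp_le k.cast_nonneg (f x)
  have hLip : ∀ x y, |(-|clamp k (f x)|) - (-|clamp k (f y)|)| ≤ L * d x y := fun x y => by
    rw [neg_sub_neg, abs_sub_comm]
    exact ((abs_abs_sub_abs_le _ _).trans (abs_clamp_sub_clamp_le _ _ _)).trans (hfL x y)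
  have hlaplace := hμ hmeas ⟨k, hbdd⟩ hL hLip
  have hle : ∫ x, Real.exp (-|f x|) ∂μ ≤ ∫ x, Real.exp (-|clamp k (f x)|) ∂μ :=
    integral_mono hexp (integrable_exp_of_forall_abs_le hmeas hbdd) fun x =>
      Real.exp_le_exp.2 (neg_le_neg (abs_clamp_le_abs k.cast_nonneg _))
  rw [integral_neg] at hlaplace
  linarith [(Real.log_le_iff_le_exp (integral_exp_pos hexp)).2 (hle.trans hlaplace)]

lemma integral_exp_le (hμ : SubgaussianLipschitz d C μ) (hf : Measurable f) (hL : 0 ≤ L)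
    (hfL : ∀ x y, |f x - f y| ≤ L * d x y) :
    ∫ x, Real.exp (f x) ∂μ ≤ Real.exp (∫ x, f x ∂μ + C * L ^ 2 / 2) := by
  have hmeas : ∀ k : ℕ, Measurable fun x => clamp k (f x) := fun k => (measurable_clamp k).comp hf
  have hbdd : ∀ (k : ℕ) x, |clamp k (f x)| ≤ k := fun k x => abs_clamp_le k.cast_nonneg _
  have hmean : Filter.Tendsto (fun k : ℕ => ∫ x, clamp k (f x) ∂μ) Filter.atTop
      (nhds (∫ x, f x ∂μ)) :=
    tendsto_integral_of_dominated_convergence (fun x => |f x|)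
      (fun k => (hmeas k).aestronglyMeasurable) (hμ.integrable hf hL hfL).abs
      (fun k => ae_of_all _ fun x => abs_clamp_le_abs k.cast_nonneg _)
      (ae_of_all _ fun x => tendsto_clamp_natCast _)
  have hlaplace := lintegral_ofReal_le_of_tendsto (fun k => (hmeas k).exp)
    (fun k => integrable_exp_of_forall_abs_le (hmeas k) (hbdd k))
    (fun k x => (Real.exp_pos _).le) (fun x => (tendsto_clamp_natCast (f x)).rexp)
    (fun k => hμ (hmeas k) ⟨k, hbdd k⟩ hL fun x y =>
      (abs_clamp_sub_clamp_le _ _ _).trans (hfL x y)) (hmean.add_const _).rexp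
  rw [integral_eq_lintegral_of_nonneg_ae (ae_of_all _ fun x => (Real.exp_pos _).le) (by fun_prop)]
  exact ENNReal.toReal_le_of_le_ofReal (Real.exp_pos _).le hlaplace

end SubgaussianLipschitz

end SubgaussianLipschitz

section FiniteKantorovich

variable {ι κ : Type*} [Fintype ι] [Fintype κ]

lemma exists_linearMap_prod_pi_apply_eq (f : (ι → ℝ) × (κ → ℝ) × ℝ →ₗ[ℝ] ℝ) :
    ∃ (a : ι → ℝ) (b : κ → ℝ) (s : ℝ),
      ∀ x y t, f (x, y, t) = ∑ i, a i * x i + ∑ j, b j * y j + s * t := by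
  classical
  refine ⟨fun i => f (Pi.single i 1, 0, 0), fun j => f (0, Pi.single j 1, 0), f (0, 0, 1),
    fun x y t => ?_⟩
  have hx := congrArg (f ∘ₗ LinearMap.inl ℝ _ _) (pi_eq_sum_univ' x)
  have hy := congrArg (f ∘ₗ LinearMap.inr ℝ _ _ ∘ₗ LinearMap.inl ℝ _ _) (pi_eq_sum_univ' y)
  have ht := (f ∘ₗ LinearMap.inr ℝ _ _ ∘ₗ LinearMap.inr ℝ _ _).map_smul t 1
  simp only [map_sum, map_smul, LinearMap.comp_apply, LinearMap.inl_apply, LinearMap.inr_apply,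
    smul_eq_mul, mul_one] at hx hy ht
  rw [← Prod.mk_zero_zero] at hx
  have hsplit : f (x, y, t) = f (x, 0, 0) + f (0, y, 0) + f (0, 0, t) := by
    simp [← map_add]
  rw [hsplit, hx, hy, ht]
  simp only [mul_comm]

/-- The two marginals and the total cost of a transport plan between finite sets. -/
def marginalsAndCost (c : ι → κ → ℝ) : (ι × κ → ℝ) →ₗ[ℝ] (ι → ℝ) × (κ → ℝ) × ℝ :=
  (LinearMap.pi fun i => ∑ j, LinearMap.proj (i, j)).prod
    ((LinearMap.pi fun j => ∑ i, LinearMap.proj (i, j)).prod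
      (∑ i, ∑ j, c i j • LinearMap.proj (i, j)))

lemma marginalsAndCost_apply (c : ι → κ → ℝ) (w : ι × κ → ℝ) :
    marginalsAndCost c w =
      (fun i => ∑ j, w (i, j), fun j => ∑ i, w (i, j), ∑ i, ∑ j, c i j * w (i, j)) := by
  ext <;> simp [marginalsAndCost]

lemma marginalsAndCost_single [DecidableEq ι] [DecidableEq κ] (c : ι → κ → ℝ) (i : ι) (j : κ) :
    marginalsAndCost c (Pi.single (i, j) 1) = (Pi.single i 1, Pi.single j 1, c i j) := by
  simp [marginalsAndCost_apply, Pi.single_apply, ite_and, funext_iff, eq_comm]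

/-- Averaging `a i + b j + s * c i j < u` against the product plan excludes `s = 0`; otherwise
`-s⁻¹ * (a i - u)` and `-s⁻¹ * b j` are admissible dual potentials. -/
lemma sum_add_sum_le_of_dual_le {p : ι → ℝ} {q : κ → ℝ}
    (hp : p ∈ stdSimplex ℝ ι) (hq : q ∈ stdSimplex ℝ κ) {c : ι → κ → ℝ} {L : ℝ}
    (hdual : ∀ (φ : ι → ℝ) (ψ : κ → ℝ), (∀ i j, φ i + ψ j ≤ c i j) →
      ∑ i, φ i * p i + ∑ j, ψ j * q j ≤ L)
    {a : ι → ℝ} {b : κ → ℝ} {s u : ℝ} (hu : ∀ i j, a i + b j + s * c i j ≤ u) (hs : s ≤ 0) :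
    ∑ i, a i * p i + ∑ j, b j * q j + s * L ≤ u := by
  rcases hs.eq_or_lt with rfl | hs
  · simp only [zero_mul, add_zero] at hu ⊢
    have hrow : ∀ i, ∑ j, p i * q j * (a i + b j) =
        a i * p i * ∑ j, q j + p i * ∑ j, b j * q j := fun i => by
      rw [Finset.mul_sum, Finset.mul_sum, ← Finset.sum_add_distrib]
      exact Finset.sum_congr rfl fun j _ => by ring
    calc ∑ i, a i * p i + ∑ j, b j * q j = ∑ i, ∑ j, p i * q j * (a i + b j) := by
          simp only [hrow, hq.2, Finset.sum_add_distrib, ← Finset.sum_mul, hp.2, mul_one, one_mul]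
      _ ≤ ∑ i, ∑ j, p i * q j * u := Finset.sum_le_sum fun i _ => Finset.sum_le_sum fun j _ =>
          mul_le_mul_of_nonneg_left (hu i j) (mul_nonneg (hp.1 i) (hq.1 j))
      _ = u := by
          simp_rw [← Finset.sum_mul, ← Finset.mul_sum, hq.2, mul_one, hp.2, one_mul]
  · have h := hdual (fun i => (a i - u) / -s) (fun j => b j / -s) fun i j => by
      rw [← add_div, div_le_iff₀ (by linarith)]
      linarith [hu i j]
    simp_rw [div_mul_eq_mul_div, ← Finset.sum_div, sub_mul, Finset.sum_sub_distrib,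
      ← Finset.mul_sum, hp.2] at h
    rw [← add_div, div_le_iff₀ (by linarith)] at h
    linarith

lemma nonpos_of_forall_le_lt_add_mul {L r s v : ℝ} (h : ∀ t ≤ L, v < r + s * t) : s ≤ 0 := by
  by_contra! hs
  have hlt := h (min L ((v - r) / s)) (min_le_left _ _)
  have hle : s * min L ((v - r) / s) ≤ v - r :=
    (mul_le_mul_of_nonneg_left (min_le_right _ _) hs.le).trans_eq (mul_div_cancel₀ _ hs.ne')
  linarith

theorem exists_transportPlan_of_dual_le {p : ι → ℝ} {q : κ → ℝ}
    (hp : p ∈ stdSimplex ℝ ι) (hq : q ∈ stdSimplex ℝ κ) {c : ι → κ → ℝ} {L : ℝ}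
    (hdual : ∀ (φ : ι → ℝ) (ψ : κ → ℝ), (∀ i j, φ i + ψ j ≤ c i j) →
      ∑ i, φ i * p i + ∑ j, ψ j * q j ≤ L) :
    ∃ w : ι × κ → ℝ, (∀ z, 0 ≤ w z) ∧ (∀ i, ∑ j, w (i, j) = p i) ∧ (∀ j, ∑ i, w (i, j) = q j) ∧
      ∑ i, ∑ j, c i j * w (i, j) ≤ L := by
  classical
  set A := marginalsAndCost c '' stdSimplex ℝ (ι × κ)
  set B := ({p} ×ˢ {q} ×ˢ Set.Iic L : Set ((ι → ℝ) × (κ → ℝ) × ℝ))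
  suffices hAB : ¬ Disjoint A B by
    obtain ⟨_, ⟨w, hw, rfl⟩, hwB⟩ := Set.not_disjoint_iff.1 hAB
    rw [marginalsAndCost_apply] at hwB
    obtain ⟨hwp, hwq, hwL⟩ := hwB
    exact ⟨w, hw.1, congrFun hwp, congrFun hwq, hwL⟩
  intro hAB
  have hAconv : Convex ℝ A := (convex_stdSimplex ℝ _).linear_image _
  have hAcomp : IsCompact A :=
    (isCompact_stdSimplex ℝ _).image (marginalsAndCost c).continuous_of_finiteDimensional
  have hBconv : Convex ℝ B := (convex_singleton p).prod ((convex_singleton q).prod (convex_Iic L))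
  have hBclosed : IsClosed B := isClosed_singleton.prod (isClosed_singleton.prod isClosed_Iic)
  obtain ⟨f, u, v, hfA, huv, hfB⟩ :=
    geometric_hahn_banach_compact_closed hAconv hAcomp hBconv hBclosed hAB
  obtain ⟨a, b, s, hf⟩ := exists_linearMap_prod_pi_apply_eq f.toLinearMap
  have hB : ∀ t ≤ L, v < ∑ i, a i * p i + ∑ j, b j * q j + s * t := fun t ht =>
    (hfB (p, q, t) ⟨rfl, rfl, ht⟩).trans_eq (hf p q t)
  have hA : ∀ i j, a i + b j + s * c i j < u := fun i j => by
    have h := hfA _ ⟨_, single_mem_stdSimplex ℝ (i, j), rfl⟩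
    rw [marginalsAndCost_single] at h
    simpa [Pi.single_apply] using (hf _ _ _).symm.trans_lt h
  exact (sum_add_sum_le_of_dual_le hp hq hdual (fun i j => (hA i j).le)
    (nonpos_of_forall_le_lt_add_mul hB)).not_gt (huv.trans (hB L le_rfl))

end FiniteKantorovich

section CouplingLifting

variable {X Y ι κ : Type*} [MeasurableSpace X] [MeasurableSpace Y] [Fintype ι] [Fintype κ]
  [MeasurableSpace ι] [DiscreteMeasurableSpace ι] [MeasurableSpace κ] [DiscreteMeasurableSpace κ]

/-- The measure on `X × Y` giving mass `w (i, j)` to the product of the fibre of `s` over `i` and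
the fibre of `t` over `j`, with `X` and `Y` conditionally independent there: the lift of a discrete
transport plan `w`. -/
def liftPlan (μ : Measure X) (ν : Measure Y) (s : X → ι) (t : Y → κ) (w : ι × κ → ℝ≥0∞) :
    Measure (X × Y) :=
  ∑ z, w z • (μ[|s ⁻¹' {z.1}]).prod (ν[|t ⁻¹' {z.2}])

variable {μ : Measure X} {ν : Measure Y} {s : X → ι} {t : Y → κ} {w : ι × κ → ℝ≥0∞}

lemma mul_cond_univ_of_le [IsFiniteMeasure μ] {A : Set X} {a : ℝ≥0∞} (ha : a ≤ μ A) :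
    a * μ[|A] Set.univ = a := by
  by_cases hA : μ A = 0
  · simp [le_antisymm (ha.trans_eq hA) zero_le]
  · have := cond_isProbabilityMeasure hA
    rw [measure_univ, mul_one]

lemma isCoupling_liftPlan [IsFiniteMeasure μ] [IsFiniteMeasure ν] (hs : Measurable s)
    (ht : Measurable t) (hrow : ∀ i, ∑ j, w (i, j) = μ (s ⁻¹' {i}))
    (hcol : ∀ j, ∑ i, w (i, j) = ν (t ⁻¹' {j})) :
    IsCoupling (liftPlan μ ν s t w) μ ν := by
  have hμw : ∀ i j, w (i, j) ≤ μ (s ⁻¹' {i}) := fun i j =>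
    (Finset.single_le_sum_of_canonicallyOrdered (f := fun j => w (i, j))
      (Finset.mem_univ j)).trans_eq (hrow i)
  have hνw : ∀ i j, w (i, j) ≤ ν (t ⁻¹' {j}) := fun i j =>
    (Finset.single_le_sum_of_canonicallyOrdered (f := fun i => w (i, j))
      (Finset.mem_univ i)).trans_eq (hcol j)
  constructor
  · rw [liftPlan, Measure.map_finset_sum measurable_fst.aemeasurable]
    simp only [Measure.map_smul, Measure.map_fst_prod, smul_smul, mul_cond_univ_of_le (hνw _ _),
      Fintype.sum_prod_type, ← Finset.sum_smul, hrow]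
    exact sum_meas_smul_cond_fiber hs μ
  · rw [liftPlan, Measure.map_finset_sum measurable_snd.aemeasurable]
    simp only [Measure.map_smul, Measure.map_snd_prod, smul_smul, mul_cond_univ_of_le (hμw _ _),
      Fintype.sum_prod_type_right, ← Finset.sum_smul, hcol]
    exact sum_meas_smul_cond_fiber ht ν

lemma lintegral_liftPlan_le (hs : Measurable s) (ht : Measurable t) (g : ι × κ → ℝ≥0∞) :
    ∫⁻ z, g (s z.1, t z.2) ∂liftPlan μ ν s t w ≤ ∑ z, w z * g z := by
  rw [liftPlan, lintegral_finsetSum_measure]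
  refine Finset.sum_le_sum fun z _ => ?_
  have hconst : ∀ᵐ x ∂(μ[|s ⁻¹' {z.1}]).prod (ν[|t ⁻¹' {z.2}]), g (s x.1, t x.2) = g z := by
    filter_upwards [Measure.quasiMeasurePreserving_fst.ae (ae_cond_mem (hs (.singleton z.1))),
      Measure.quasiMeasurePreserving_snd.ae (ae_cond_mem (ht (.singleton z.2)))] with x hx hy
    rw [Set.mem_preimage.1 hx, Set.mem_preimage.1 hy]
  rw [lintegral_smul_measure, lintegral_congr_ae hconst, lintegral_const, smul_eq_mul]
  gcongr
  rw [← Set.univ_prod_univ, Measure.prod_prod]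
  exact mul_le_of_le_one_right' (mul_le_one' prob_le_one prob_le_one)

end CouplingLifting

section Kantorovich

section Partition

variable {X ι : Type*} [MeasurableSpace X] [MeasurableSpace ι] [DiscreteMeasurableSpace ι]
  {μ : Measure X} {s : X → ι}

lemma integrable_comp_of_finite [Finite ι] [IsFiniteMeasure μ] (hs : Measurable s) (g : ι → ℝ) :
    Integrable (fun x => g (s x)) μ :=
  (Integrable.of_finite (μ := μ.map s)).comp_measurable hs

lemma integral_comp_of_fintype [Fintype ι] [IsFiniteMeasure μ] (hs : Measurable s) (g : ι → ℝ) :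
    ∫ x, g (s x) ∂μ = ∑ i, g i * μ.real (s ⁻¹' {i}) := by
  rw [← integral_map hs.aemeasurable Measurable.of_discrete.aestronglyMeasurable,
    integral_fintype .of_finite]
  simp [map_measureReal_apply hs (.singleton _), mul_comm]

lemma measureReal_fiber_mem_stdSimplex [Fintype ι] [IsProbabilityMeasure μ] (hs : Measurable s) :
    (fun i => μ.real (s ⁻¹' {i})) ∈ stdSimplex ℝ ι :=
  ⟨fun _ => measureReal_nonneg, by simpa using (integral_comp_of_fintype (μ := μ) hs 1).symm⟩

end Partition

variable {X : Type*} [PseudoMetricSpace X]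

/-- The supremum of the cones `φ i - dist x (u i)`, clamped to be bounded below. -/
lemma exists_lipschitzWith_one_of_add_le_dist {ι : Type*} [Finite ι] [Nonempty ι] {u : ι → X}
    {φ ψ : ι → ℝ} (h : ∀ i j, φ i + ψ j ≤ dist (u i) (u j)) :
    ∃ f : X → ℝ, LipschitzWith 1 f ∧ (∃ M, ∀ x, |f x| ≤ M) ∧
      ∀ i, φ i ≤ f (u i) ∧ f (u i) ≤ -ψ i := by
  have := Fintype.ofFinite ι
  set g : X → ℝ := fun x => ⨆ i, (φ i - dist x (u i))
  have hbdd : ∀ x, BddAbove (Set.range fun i => φ i - dist x (u i)) := fun x =>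
    (Set.finite_range _).bddAbove
  have hg : LipschitzWith 1 g := LipschitzWith.of_le_add fun x y => ciSup_le fun i => by
    have := le_ciSup (hbdd y) i
    linarith [dist_triangle_left y (u i) x]
  have hφg : ∀ i, φ i ≤ g (u i) := fun i => by
    simpa using le_ciSup (hbdd (u i)) i
  have hgψ : ∀ j, g (u j) ≤ -ψ j := fun j => ciSup_le fun i => by
    rw [dist_comm]
    linarith [h i j]
  set M := ∑ i, (|φ i| + |ψ i|)
  have hle : ∀ i, |φ i| + |ψ i| ≤ M := fun i =>
    Finset.single_le_sum (f := fun i => |φ i| + |ψ i|) (fun _ _ => by positivity)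
      (Finset.mem_univ i)
  have hφM : ∀ i, |φ i| ≤ M := fun i => (le_add_of_nonneg_right (abs_nonneg _)).trans (hle i)
  have hψM : ∀ i, |(-ψ i)| ≤ M := fun i =>
    (abs_neg (ψ i)).trans_le ((le_add_of_nonneg_left (abs_nonneg _)).trans (hle i))
  refine ⟨fun x => clamp M (g x), LipschitzWith.of_dist_le_mul fun x y =>
    (abs_clamp_sub_clamp_le M _ _).trans (hg.dist_le_mul x y),
    ⟨M, fun x => abs_clamp_le (by positivity) _⟩, fun i => ⟨?_, ?_⟩⟩
  · exact (clamp_of_abs_le (hφM i)).ge.trans (clamp_mono M (hφg i))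
  · exact (clamp_mono M (hgψ i)).trans_eq (clamp_of_abs_le (hψM i))

variable [MeasurableSpace X]

/-- `L` bounds the dual Kantorovich–Rubinstein problem for `μ` and `ν`, posed over bounded
functions. -/
def DualBound (μ ν : Measure X) (L : ℝ) : Prop :=
  ∀ f : X → ℝ, LipschitzWith 1 f → (∃ M, ∀ x, |f x| ≤ M) → ∫ x, f x ∂μ - ∫ x, f x ∂ν ≤ L

variable {μ ν : Measure X} {L : ℝ}

lemma DualBound.nonneg (h : DualBound μ ν L) : 0 ≤ L := by
  simpa using h 0 (LipschitzWith.const' 0) ⟨0, by simp⟩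

variable [OpensMeasurableSpace X]

lemma DualBound.integrable_dist [IsFiniteMeasure ν] (h : DualBound μ ν L) (y : X)
    (hμ : Integrable (fun x => dist x y) μ) : Integrable (fun x => dist x y) ν := by
  have hmeas : Measurable fun x => dist x y := (continuous_id.dist continuous_const).measurable
  refine integrable_of_forall_integral_abs_clamp_le hmeas (B := ∫ x, dist x y ∂μ + L) fun k => ?_
  have hLip : LipschitzWith 1 fun x => -|clamp k (dist x y)| := .of_dist_le_mul fun x z => by
    rw [dist_neg_neg, NNReal.coe_one, one_mul]
    exact ((abs_abs_sub_abs_le _ _).trans (abs_clamp_sub_clamp_le _ _ _)).trans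
      (abs_dist_sub_le x z y)
  have hdual := h _ hLip ⟨k, fun x => by simpa using abs_clamp_le k.cast_nonneg (dist x y)⟩
  have hle : ∫ x, |clamp k (dist x y)| ∂μ ≤ ∫ x, dist x y ∂μ :=
    integral_mono_of_nonneg (ae_of_all _ fun _ => abs_nonneg _) hμ <| ae_of_all _ fun x =>
      (abs_clamp_le_abs k.cast_nonneg _).trans_eq abs_dist
  rw [integral_neg, integral_neg] at hdual
  linarith

section Discretization

variable {ι : Type*} [MeasurableSpace ι] [DiscreteMeasurableSpace ι]
  [IsProbabilityMeasure μ] [IsProbabilityMeasure ν] {s : X → ι} {u : ι → X}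

lemma DualBound.sum_add_sum_le [Fintype ι] (h : DualBound μ ν L) (hs : Measurable s)
    (hμ : Integrable (fun x => dist x (u (s x))) μ) (hν : Integrable (fun x => dist x (u (s x))) ν)
    {φ ψ : ι → ℝ} (hφψ : ∀ i j, φ i + ψ j ≤ dist (u i) (u j)) :
    ∑ i, φ i * μ.real (s ⁻¹' {i}) + ∑ i, ψ i * ν.real (s ⁻¹' {i}) ≤
      L + ∫ x, dist x (u (s x)) ∂μ + ∫ x, dist x (u (s x)) ∂ν := by
  have : Nonempty ι := (nonempty_of_isProbabilityMeasure μ).map s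
  obtain ⟨f, hf, ⟨M, hM⟩, hfu⟩ := exists_lipschitzWith_one_of_add_le_dist hφψ
  have hfi : ∀ ρ : Measure X, [IsFiniteMeasure ρ] → Integrable f ρ := fun ρ _ =>
    integrable_of_forall_abs_le hf.continuous.measurable hM
  have hLip : ∀ x y, |f x - f y| ≤ dist x y := fun x y => by
    simpa [Real.dist_eq] using hf.dist_le_mul x y
  have hφ : ∫ x, φ (s x) ∂μ ≤ ∫ x, f x ∂μ + ∫ x, dist x (u (s x)) ∂μ := by
    rw [← integral_add (hfi μ) hμ]
    exact integral_mono (integrable_comp_of_finite hs φ) ((hfi μ).add hμ) fun x => by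
      linarith [(hfu (s x)).1, (abs_le.1 (hLip x (u (s x)))).1]
  have hψ : ∫ x, ψ (s x) ∂ν ≤ ∫ x, dist x (u (s x)) ∂ν - ∫ x, f x ∂ν := by
    rw [← integral_sub hν (hfi ν)]
    exact integral_mono (integrable_comp_of_finite hs ψ) (hν.sub (hfi ν)) fun x => by
      linarith [(hfu (s x)).2, (abs_le.1 (hLip x (u (s x)))).2]
  rw [← integral_comp_of_fintype hs, ← integral_comp_of_fintype hs]
  linarith [h f hf ⟨M, hM⟩]

lemma DualBound.exists_coupling_lintegral_le [Finite ι] (h : DualBound μ ν L) (hs : Measurable s)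
    (hμ : Integrable (fun x => dist x (u (s x))) μ)
    (hν : Integrable (fun x => dist x (u (s x))) ν) :
    ∃ π, IsCoupling π μ ν ∧ ∫⁻ z, ENNReal.ofReal (dist (u (s z.1)) (u (s z.2))) ∂π ≤
      ENNReal.ofReal (L + ∫ x, dist x (u (s x)) ∂μ + ∫ x, dist x (u (s x)) ∂ν) := by
  have := Fintype.ofFinite ι
  obtain ⟨w, hw, hrow, hcol, hcost⟩ := exists_transportPlan_of_dual_le
    (measureReal_fiber_mem_stdSimplex hs) (measureReal_fiber_mem_stdSimplex hs)
    fun _ _ => h.sum_add_sum_le hs hμ hν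
  refine ⟨liftPlan μ ν s s fun z => ENNReal.ofReal (w z),
    isCoupling_liftPlan hs hs (fun i => ?_) (fun j => ?_), ?_⟩
  · rw [← ENNReal.ofReal_sum_of_nonneg fun _ _ => hw _, hrow, ofReal_measureReal]
  · rw [← ENNReal.ofReal_sum_of_nonneg fun _ _ => hw _, hcol, ofReal_measureReal]
  · refine (lintegral_liftPlan_le hs hs
      fun z => ENNReal.ofReal (dist (u z.1) (u z.2))).trans ?_
    simp_rw [← ENNReal.ofReal_mul (hw _)]
    rw [← ENNReal.ofReal_sum_of_nonneg fun z _ => mul_nonneg (hw z) dist_nonneg,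
      Fintype.sum_prod_type]
    simp_rw [mul_comm (w _)]
    exact ENNReal.ofReal_le_ofReal hcost

lemma measurable_dist_comp_of_countable [Countable ι] (hs : Measurable s) :
    Measurable fun x => dist x (u (s x)) :=
  (measurable_from_prod_countable_left (f := fun z : X × ι => dist z.1 (u z.2)) fun i =>
    (continuous_id.dist (continuous_const (y := u i))).measurable).comp (measurable_id.prodMk hs)

lemma DualBound.wassersteinDist_le_add [Finite ι] (h : DualBound μ ν L) (hs : Measurable s)
    (hμ : Integrable (fun x => dist x (u (s x))) μ)
    (hν : Integrable (fun x => dist x (u (s x))) ν) :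
    wassersteinDist 1 dist μ ν ≤
      ENNReal.ofReal (L + 2 * ∫ x, dist x (u (s x)) ∂μ + 2 * ∫ x, dist x (u (s x)) ∂ν) := by
  obtain ⟨π, hπ, hcost⟩ := h.exists_coupling_lintegral_le hs hμ hν
  set e : X → ℝ := fun x => dist x (u (s x))
  have he : Measurable fun x => ENNReal.ofReal (e x) :=
    (measurable_dist_comp_of_countable hs).ennreal_ofReal
  have he₀ : ∀ ρ : Measure X, 0 ≤ ∫ x, e x ∂ρ := fun ρ => integral_nonneg fun _ => dist_nonneg
  have hfst : ∫⁻ z, ENNReal.ofReal (e z.1) ∂π = ENNReal.ofReal (∫ x, e x ∂μ) := by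
    rw [ofReal_integral_eq_lintegral_ofReal hμ (ae_of_all _ fun _ => dist_nonneg),
      hπ.lintegral_fst he]
  have hsnd : ∫⁻ z, ENNReal.ofReal (e z.2) ∂π = ENNReal.ofReal (∫ x, e x ∂ν) := by
    rw [ofReal_integral_eq_lintegral_ofReal hν (ae_of_all _ fun _ => dist_nonneg),
      hπ.lintegral_snd he]
  have htri : ∀ z : X × X, ENNReal.ofReal (dist z.1 z.2) ≤ ENNReal.ofReal (e z.1) +
      ENNReal.ofReal (dist (u (s z.1)) (u (s z.2))) + ENNReal.ofReal (e z.2) := fun z => by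
    rw [← ENNReal.ofReal_add dist_nonneg dist_nonneg,
      ← ENNReal.ofReal_add (add_nonneg dist_nonneg dist_nonneg) dist_nonneg]
    exact ENNReal.ofReal_le_ofReal <| (dist_triangle4 z.1 (u (s z.1)) (u (s z.2)) z.2).trans_eq
      (by rw [dist_comm (u (s z.2)) z.2])
  calc wassersteinDist 1 dist μ ν
      ≤ ∫⁻ z, ENNReal.ofReal (dist z.1 z.2) ∂π := hπ.wassersteinDist_one_le dist
    _ ≤ ∫⁻ z, ENNReal.ofReal (e z.1) + ENNReal.ofReal (dist (u (s z.1)) (u (s z.2))) +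
          ENNReal.ofReal (e z.2) ∂π := lintegral_mono htri
    _ ≤ ENNReal.ofReal (∫ x, e x ∂μ) +
          ENNReal.ofReal (L + ∫ x, e x ∂μ + ∫ x, e x ∂ν) + ENNReal.ofReal (∫ x, e x ∂ν) := by
        have he₁ : Measurable fun z : X × X => ENNReal.ofReal (e z.1) := he.comp measurable_fst
        have he₂ : Measurable fun z : X × X => ENNReal.ofReal (e z.2) := he.comp measurable_snd
        rw [lintegral_add_right _ he₂, lintegral_add_left he₁, hfst, hsnd]
        gcongr
    _ = _ := by
        have hL := h.nonneg
        rw [← ENNReal.ofReal_add (he₀ μ) (by linarith [he₀ μ, he₀ ν]),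
          ← ENNReal.ofReal_add (by linarith [he₀ μ, he₀ ν]) (he₀ ν)]
        ring_nf

end Discretization

section NearestPoint

open TopologicalSpace (denseSeq)

variable [SecondCountableTopology X] [Nonempty X]

lemma dist_nearestPt_denseSeq_le (n : ℕ) (x : X) :
    dist x (SimpleFunc.nearestPt (denseSeq X) n x) ≤ dist x (denseSeq X 0) := by
  simpa only [edist_dist, ENNReal.ofReal_le_ofReal_iff dist_nonneg, dist_comm x] using
    SimpleFunc.edist_nearestPt_le (denseSeq X) x n.zero_le

lemma integrable_dist_nearestPt_denseSeq (hμ : ∀ y, Integrable (fun x => dist x y) μ) (n : ℕ) :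
    Integrable (fun x => dist x (SimpleFunc.nearestPt (denseSeq X) n x)) μ :=
  (hμ (denseSeq X 0)).mono'
    (measurable_id.dist (SimpleFunc.measurable _)).aestronglyMeasurable <| ae_of_all _ fun x => by
      simpa using dist_nearestPt_denseSeq_le n x

lemma tendsto_integral_dist_nearestPt_denseSeq (hμ : ∀ y, Integrable (fun x => dist x y) μ) :
    Filter.Tendsto (fun n => ∫ x, dist x (SimpleFunc.nearestPt (denseSeq X) n x) ∂μ)
      Filter.atTop (nhds 0) := by
  have hlim : ∀ x, Filter.Tendsto (fun n => dist x (SimpleFunc.nearestPt (denseSeq X) n x))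
      Filter.atTop (nhds 0) := fun x => by
    simpa using (tendsto_const_nhds (x := x)).dist (SimpleFunc.tendsto_nearestPt
      (TopologicalSpace.denseRange_denseSeq X x))
  simpa using tendsto_integral_of_dominated_convergence _
    (fun n => (integrable_dist_nearestPt_denseSeq hμ n).aestronglyMeasurable) (hμ (denseSeq X 0))
    (fun n => ae_of_all _ fun x => by simpa using dist_nearestPt_denseSeq_le n x)
    (ae_of_all _ hlim)

end NearestPoint

theorem DualBound.wassersteinDist_le [SecondCountableTopology X] [IsProbabilityMeasure μ]
    [IsProbabilityMeasure ν] (h : DualBound μ ν L) (hμ : ∀ y, Integrable (fun x => dist x y) μ)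
    (hν : ∀ y, Integrable (fun x => dist x y) ν) :
    wassersteinDist 1 dist μ ν ≤ ENNReal.ofReal L := by
  have := nonempty_of_isProbabilityMeasure μ
  set e := TopologicalSpace.denseSeq X
  have hlim : Filter.Tendsto (fun n => L + 2 * ∫ x, dist x (SimpleFunc.nearestPt e n x) ∂μ +
      2 * ∫ x, dist x (SimpleFunc.nearestPt e n x) ∂ν) Filter.atTop (nhds L) := by
    simpa using (((tendsto_integral_dist_nearestPt_denseSeq hμ).const_mul 2).const_add L).add
      ((tendsto_integral_dist_nearestPt_denseSeq hν).const_mul 2)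
  refine ge_of_tendsto' (ENNReal.tendsto_ofReal hlim) fun n => ?_
  let s : X → Fin (n + 1) := fun x =>
    ⟨SimpleFunc.nearestPtInd e n x, Nat.lt_succ_of_le (SimpleFunc.nearestPtInd_le e n x)⟩
  have hs : Measurable s := measurable_to_countable' fun i => by
    simpa [s, Set.preimage, Fin.ext_iff] using (SimpleFunc.nearestPtInd e n).measurableSet_fiber i
  exact h.wassersteinDist_le_add (s := s) (u := fun i => e i) hs
    (integrable_dist_nearestPt_denseSeq hμ n) (integrable_dist_nearestPt_denseSeq hν n)

end Kantorovich

section BobkovGotze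

lemma tpIneq_one_of_cost_eq_zero {X : Type*} [MeasurableSpace X] {d : X → X → ℝ}
    (hd : ∀ x y, d x y = 0) (C : ℝ) (μ : Measure X) [IsProbabilityMeasure μ] :
    TpIneq 1 d C μ := fun ν _ => by
  have hπ : IsCoupling (μ.prod ν) μ ν := ⟨by simp, by simp⟩
  have h : wassersteinDist 1 d μ ν ≤ 0 := (hπ.wassersteinDist_one_le d).trans_eq (by simp [hd])
  simp [nonpos_iff_eq_zero.1 h]

variable {X : Type*} [PseudoMetricSpace X] [MeasurableSpace X] [OpensMeasurableSpace X]
  {μ ν : Measure X} [IsProbabilityMeasure μ] [IsProbabilityMeasure ν] {C : ℝ}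

lemma SubgaussianLipschitz.dualBound (hμ : SubgaussianLipschitz dist C μ) (hac : ν ≪ μ)
    (hint : Integrable (llr ν μ) ν) : DualBound μ ν √(2 * C * ∫ x, llr ν μ x ∂ν) := by
  rintro f hf ⟨M, hM⟩
  have hquad : ∀ l : ℝ, 0 ≤ C / 2 * (l * l) + -(∫ x, f x ∂μ - ∫ x, f x ∂ν) * l +
      ∫ x, llr ν μ x ∂ν := fun l => by
    have hmeas : Measurable fun x => -l * f x := hf.continuous.measurable.const_mul _
    have hbdd : ∀ x, |-l * f x| ≤ |l| * M := fun x => by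
      rw [abs_mul, abs_neg]
      gcongr
      exact hM x
    have hLip : ∀ x y, |-l * f x - -l * f y| ≤ |l| * dist x y := fun x y => by
      rw [← mul_sub, abs_mul, abs_neg]
      gcongr
      simpa [Real.dist_eq] using hf.dist_le_mul x y
    have hlog := (Real.log_le_iff_le_exp (integral_exp_pos
      (integrable_exp_of_forall_abs_le hmeas hbdd))).2 (hμ hmeas ⟨_, hbdd⟩ (abs_nonneg l) hLip)
    have hDV := integral_le_integral_llr_add_log hac hint hmeas hbdd
    rw [integral_const_mul, sq_abs] at hlog
    rw [integral_const_mul] at hDV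
    linarith
  have hdiscrim := discrim_le_zero hquad
  rw [discrim] at hdiscrim
  exact Real.le_sqrt_of_sq_le (by linarith)

lemma SubgaussianLipschitz.integrable_dist (hμ : SubgaussianLipschitz dist C μ) (y : X) :
    Integrable (fun x => dist x y) μ :=
  hμ.integrable (continuous_id.dist continuous_const).measurable zero_le_one fun x z => by
    simpa using abs_dist_sub_le x z y

theorem SubgaussianLipschitz.tpIneq [SecondCountableTopology X]
    (hμ : SubgaussianLipschitz dist C μ) (hC : 0 < C) : TpIneq 1 dist C μ := fun ν _ => by
  by_cases h : ν ≪ μ ∧ Integrable (llr ν μ) ν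
  · obtain ⟨hac, hint⟩ := h
    have hH := integral_llr_nonneg hac hint
    have hdual := hμ.dualBound hac hint
    rw [relEntropy_of_ac hac hint, ← ENNReal.ofReal_mul (by positivity)]
    calc wassersteinDist 1 dist μ ν ^ 2
        ≤ ENNReal.ofReal √(2 * C * ∫ x, llr ν μ x ∂ν) ^ 2 := by
          gcongr
          exact hdual.wassersteinDist_le hμ.integrable_dist fun y =>
            hdual.integrable_dist y (hμ.integrable_dist y)
      _ = ENNReal.ofReal (2 * C * ∫ x, llr ν μ x ∂ν) := by
          rw [← ENNReal.ofReal_pow (Real.sqrt_nonneg _), Real.sq_sqrt (by positivity)]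
  · have htop : relEntropy ν μ = ∞ := if_neg h
    rw [htop, ENNReal.mul_top (by simpa using hC)]
    exact le_top

end BobkovGotze

section L1Distance

variable {ι E : Type*} [Fintype ι] [PseudoMetricSpace E]

/-- The `ℓ¹` distance on `ι → E`, with its topology kept definitionally equal to the product
topology, so that it is compatible with the product `σ`-algebra. -/
abbrev l1PseudoMetricSpace (ι E : Type*) [Fintype ι] [PseudoMetricSpace E] :
    PseudoMetricSpace (ι → E) :=
  (PseudoMetricSpace.induced (WithLp.toLp 1)
    (inferInstance : PseudoMetricSpace (PiLp 1 fun _ : ι => E))).replaceTopology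
    (PiLp.homeomorph 1 fun _ : ι => E).symm.isInducing.eq_induced

lemma dist_l1PseudoMetricSpace :
    (l1PseudoMetricSpace ι E).dist = fun x y => ∑ i, dist (x i) (y i) := by
  ext x y
  refine (PiLp.dist_eq_sum (by simp) (WithLp.toLp 1 x) (WithLp.toLp 1 y)).trans ?_
  simp

lemma abs_sub_le_sum_dist_of_update [DecidableEq ι] {f : (ι → E) → ℝ} {α : ℝ}
    (h : ∀ x k y, |f x - f (Function.update x k y)| ≤ α * dist (x k) y) (x y : ι → E) :
    |f x - f y| ≤ α * ∑ i, dist (x i) (y i) := by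
  suffices ∀ s : Finset ι, |f x - f (s.piecewise y x)| ≤ α * ∑ i ∈ s, dist (x i) (y i) by
    simpa using this Finset.univ
  intro s
  induction s using Finset.induction_on with
  | empty => simp
  | insert j s hj ih =>
    rw [Finset.piecewise_insert, Finset.sum_insert hj, mul_add, add_comm]
    have hj' := h (s.piecewise y x) j (y j)
    rw [Finset.piecewise_eq_of_notMem _ _ _ hj] at hj'
    exact (abs_sub_le _ _ _).trans (add_le_add ih hj')

variable [MeasurableSpace E] [OpensMeasurableSpace E] [SecondCountableTopology E]

lemma measurable_of_abs_sub_le_sum_dist {f : (ι → E) → ℝ} {L : ℝ}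
    (hf : ∀ x y, |f x - f y| ≤ L * ∑ i, dist (x i) (y i)) : Measurable f := by
  have hLip := LipschitzWith.of_dist_le' (f := f) (K := |L| * Fintype.card ι) fun x y => by
    refine (hf x y).trans ?_
    rw [mul_assoc]
    gcongr
    · exact le_abs_self L
    · simpa using Finset.sum_le_card_nsmul Finset.univ _ _ fun i _ => dist_le_pi_dist x y i
  exact hLip.continuous.measurable

lemma SubgaussianLipschitz.tpIneq_sum_dist {C : ℝ} {μ : Measure (ι → E)} [IsProbabilityMeasure μ]
    (hμ : SubgaussianLipschitz (fun x y => ∑ i, dist (x i) (y i)) C μ) (hC : 0 < C) :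
    TpIneq 1 (fun x y => ∑ i, dist (x i) (y i)) C μ := by
  rw [← dist_l1PseudoMetricSpace] at hμ ⊢
  exact @SubgaussianLipschitz.tpIneq _ (l1PseudoMetricSpace ι E) _ _ μ _ C _ hμ hC

end L1Distance

section Chain

variable {E : Type*} [MeasurableSpace E]

lemma measurable_finSnoc (n : ℕ) :
    Measurable fun p : (Fin n → E) × E => (Fin.snoc p.1 p.2 : Fin (n + 1) → E) := by
  refine measurable_pi_iff.2 (Fin.lastCases ?_ fun j => ?_)
  · simpa using measurable_snd
  · simpa [Function.comp_def] using (measurable_pi_apply j).comp measurable_fst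

lemma measurable_finAppend (k m : ℕ) :
    Measurable fun p : (Fin k → E) × (Fin m → E) => Fin.append p.1 p.2 := by
  refine measurable_pi_iff.2 (Fin.addCases (fun j => ?_) fun j => ?_)
  · simpa [Function.comp_def] using (measurable_pi_apply j).comp measurable_fst
  · simpa [Function.comp_def] using (measurable_pi_apply j).comp measurable_snd

/-- The conditional expectation of `F` given that the first `k` of the `n` coordinates equal `x`. -/
def condMean (K : (i : ℕ) → (Fin i → E) → Measure E) {n k m : ℕ} (F : (Fin n → E) → ℝ)
    (e : n = k + m) (x : Fin k → E) : ℝ :=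
  ∫ u, F (Fin.append x u ∘ Fin.cast e) ∂futureChain K k x m

variable {K : (i : ℕ) → (Fin i → E) → Measure E}

lemma condMean_zero {n : ℕ} {F : (Fin n → E) → ℝ} (hF : Measurable F) (x : Fin n → E) :
    condMean K F (m := 0) rfl x = F x := by
  have hmeas : Measurable fun u : Fin 0 → E => F (Fin.append x u) :=
    hF.comp ((measurable_finAppend n 0).comp measurable_prodMk_left)
  exact (integral_dirac' _ _ hmeas.stronglyMeasurable).trans (congrArg F (Fin.append_elim0 x))

variable (hKm : ∀ i, Measurable (K i)) (hKp : ∀ i x, IsProbabilityMeasure (K i x))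
include hKm hKp

lemma measurable_map_finSnoc (n : ℕ) :
    Measurable fun x => (K n x).map (Fin.snoc (α := fun _ => E) x) := by
  let κ : Kernel (Fin n → E) E := ⟨K n, hKm n⟩
  have : IsMarkovKernel κ := ⟨hKp n⟩
  refine Measure.measurable_of_measurable_coe _ fun s hs => ?_
  convert Kernel.measurable_kernel_prodMk_left (κ := κ) (measurable_finSnoc n hs) using 2 with x
  exact Measure.map_apply ((measurable_finSnoc n).comp measurable_prodMk_left) hs

lemma isProbabilityMeasure_chainMeasure (n : ℕ) : IsProbabilityMeasure (chainMeasure K n) := by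
  induction n with
  | zero => exact Measure.dirac.isProbabilityMeasure
  | succ n ih =>
    exact isProbabilityMeasure_bind (measurable_map_finSnoc hKm hKp n).aemeasurable <|
      ae_of_all _ fun x => Measure.isProbabilityMeasure_map
        ((measurable_finSnoc n).comp measurable_prodMk_left).aemeasurable

lemma measurable_integral_snoc {n : ℕ} {F : (Fin (n + 1) → E) → ℝ} (hF : Measurable F) :
    Measurable fun x => ∫ y, F (Fin.snoc x y) ∂K n x := by
  let κ : Kernel (Fin n → E) E := ⟨K n, hKm n⟩
  have : IsMarkovKernel κ := ⟨hKp n⟩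
  exact ((hF.comp (measurable_finSnoc n)).stronglyMeasurable.integral_kernel_prod_right'
    (κ := κ)).measurable

lemma integral_chainMeasure_succ {n : ℕ} {F : (Fin (n + 1) → E) → ℝ} (hF : Measurable F) {M : ℝ}
    (hM : ∀ x, |F x| ≤ M) :
    ∫ x, F x ∂chainMeasure K (n + 1) =
      ∫ x, ∫ y, F (Fin.snoc x y) ∂K n x ∂chainMeasure K n := by
  have := isProbabilityMeasure_chainMeasure hKm hKp (n + 1)
  have h := Kernel.integral_comp (κ := Kernel.const Unit (chainMeasure K n))
    (η := ⟨_, measurable_map_finSnoc hKm hKp n⟩) (a := ()) (f := F) (by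
      rw [Kernel.comp_apply]
      exact integrable_of_forall_abs_le (μ := chainMeasure K (n + 1)) hF hM)
  rw [Kernel.comp_apply] at h
  exact h.trans <| integral_congr_ae <| ae_of_all _ fun x =>
    integral_map ((measurable_finSnoc n).comp measurable_prodMk_left).aemeasurable
      hF.aestronglyMeasurable

lemma integral_exp_chainMeasure_succ_le {n : ℕ} {F : (Fin (n + 1) → E) → ℝ} (hF : Measurable F)
    {G : (Fin n → E) → ℝ} (hG : Measurable G) {M : ℝ} (hFM : ∀ x, |F x| ≤ M)
    (hGM : ∀ x, |G x| ≤ M) {c : ℝ}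
    (h : ∀ x, ∫ y, Real.exp (F (Fin.snoc x y)) ∂K n x ≤ Real.exp (G x + c)) :
    ∫ x, Real.exp (F x) ∂chainMeasure K (n + 1) ≤
      (∫ x, Real.exp (G x) ∂chainMeasure K n) * Real.exp c := by
  have := isProbabilityMeasure_chainMeasure hKm hKp n
  have hexpM : ∀ x, |Real.exp (F x)| ≤ Real.exp M := fun x => abs_exp_le_exp_of_abs_le (hFM x)
  rw [integral_chainMeasure_succ hKm hKp hF.exp hexpM, ← integral_mul_const]
  exact integral_mono
    (integrable_of_forall_abs_le (measurable_integral_snoc hKm hKp hF.exp) fun x =>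
      abs_integral_le_of_forall_abs_le fun y => hexpM _)
    ((integrable_exp_of_forall_abs_le hG hGM).mul_const _) fun x =>
      (h x).trans_eq (Real.exp_add _ _)

lemma isProbabilityMeasure_futureChain (k : ℕ) (x : Fin k → E) (m : ℕ) :
    IsProbabilityMeasure (futureChain K k x m) :=
  isProbabilityMeasure_chainMeasure
    (fun _ => (hKm _).comp ((measurable_finAppend k _).comp measurable_prodMk_left))
    (fun _ _ => hKp _ _) m

lemma condMean_succ {n k m : ℕ} {F : (Fin (n + 1) → E) → ℝ} (hF : Measurable F) {M : ℝ}
    (hM : ∀ x, |F x| ≤ M) (e : n = k + m) (x : Fin k → E) :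
    condMean K F (m := m + 1) (congrArg (· + 1) e) x =
      condMean K (fun x => ∫ y, F (Fin.snoc x y) ∂K n x) e x := by
  subst e
  have h := integral_chainMeasure_succ (K := fun i u => K (k + i) (Fin.append x u))
    (fun _ => (hKm _).comp ((measurable_finAppend k _).comp measurable_prodMk_left))
    (fun _ _ => hKp _ _) (n := m) (F := fun u => F (Fin.append x u :))
    (hF.comp ((measurable_finAppend k (m + 1)).comp measurable_prodMk_left)) fun _ => hM _
  simp only [Fin.append_snoc] at h
  exact h

/-- Peeling off the last coordinate replaces `F` by its conditional mean given the others, at the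
cost of one factor `exp (C * L ^ 2 / 2)`. -/
theorem integral_exp_chainMeasure_le {d : E → E → ℝ} {C : ℝ}
    (hK : ∀ i x, SubgaussianLipschitz d C (K i x)) {L : ℝ} (hL : 0 ≤ L) {n : ℕ}
    {F : (Fin n → E) → ℝ} (hF : Measurable F) {M : ℝ} (hM : ∀ x, |F x| ≤ M)
    (hLip : ∀ k m (e : n = k + 1 + m) (x : Fin k → E) (y z : E),
      |condMean K F e (Fin.snoc x y) - condMean K F e (Fin.snoc x z)| ≤ L * d y z) :
    ∫ x, Real.exp (F x) ∂chainMeasure K n ≤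
      Real.exp (∫ x, F x ∂chainMeasure K n + n * (C * L ^ 2 / 2)) := by
  induction n with
  | zero =>
    simp [chainMeasure, integral_dirac' _ _ hF.exp.stronglyMeasurable,
      integral_dirac' _ _ hF.stronglyMeasurable]
  | succ n ih =>
    set G : (Fin n → E) → ℝ := fun x => ∫ y, F (Fin.snoc x y) ∂K n x
    have hG : Measurable G := measurable_integral_snoc hKm hKp hF
    have hGM : ∀ x, |G x| ≤ M := fun x => abs_integral_le_of_forall_abs_le fun y => hM _
    have hlast : ∀ x, ∫ y, Real.exp (F (Fin.snoc x y)) ∂K n x ≤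
        Real.exp (G x + C * L ^ 2 / 2) := fun x => by
      refine hK n x (hF.comp ((measurable_finSnoc n).comp measurable_prodMk_left))
        ⟨M, fun y => hM _⟩ hL fun y z => ?_
      simpa only [condMean_zero hF] using hLip n 0 rfl x y z
    have hih := ih hG hGM fun k m e x y z => by
      simpa only [condMean_succ hKm hKp hF hM e] using
        hLip k (m + 1) (congrArg (· + 1) e) x y z
    calc ∫ x, Real.exp (F x) ∂chainMeasure K (n + 1)
        ≤ (∫ x, Real.exp (G x) ∂chainMeasure K n) * Real.exp (C * L ^ 2 / 2) :=
          integral_exp_chainMeasure_succ_le hKm hKp hF hG hM hGM hlast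
      _ ≤ Real.exp (∫ x, G x ∂chainMeasure K n + n * (C * L ^ 2 / 2)) *
            Real.exp (C * L ^ 2 / 2) := by gcongr
      _ = _ := by
          rw [integral_chainMeasure_succ hKm hKp hF hM, ← Real.exp_add, Nat.cast_succ]
          congr 1
          ring

end Chain

section Tensorization

variable {E : Type*} [PseudoMetricSpace E] [MeasurableSpace E]

/-- Condition (C1') for a chain of length `n`: changing the coordinate revealed last moves the
conditional law of the future by at most `S` times the change, in the dual `ℓ¹` distance. Compared
with the paper, the history is split as `Fin.snoc x y`, so that the changed coordinate `y` is
explicit. -/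
def FutureLipschitz (K : (i : ℕ) → (Fin i → E) → Measure E) (S : ℝ) (n : ℕ) : Prop :=
  ∀ ⦃k m : ℕ⦄, n = k + 1 + m → ∀ ⦃f : (Fin m → E) → ℝ⦄, Measurable f → (∃ M, ∀ u, |f u| ≤ M) →
    (∀ u v, |f u - f v| ≤ ∑ i, dist (u i) (v i)) → ∀ (x : Fin k → E) (y z : E),
      |∫ u, f u ∂futureChain K (k + 1) (Fin.snoc x y) m -
        ∫ u, f u ∂futureChain K (k + 1) (Fin.snoc x z) m| ≤ S * dist y z

variable {K : (i : ℕ) → (Fin i → E) → Measure E} {S C : ℝ} {n : ℕ}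

lemma FutureLipschitz.of_update
    (h : ∀ (k : ℕ) (hk : 1 ≤ k) (_ : k ≤ n) (f : (Fin (n - k) → E) → ℝ),
      Measurable f → (∃ M : ℝ, ∀ u, |f u| ≤ M) →
      (∀ u v : Fin (n - k) → E, |f u - f v| ≤ ∑ i, dist (u i) (v i)) →
      ∀ (x : Fin k → E) (y : E),
        |(∫ u, f u ∂futureChain K k x (n - k)) -
            ∫ u, f u ∂futureChain K k (Function.update x ⟨k - 1, Nat.sub_one_lt_of_le hk le_rfl⟩ y)
              (n - k)| ≤
          S * dist (x ⟨k - 1, Nat.sub_one_lt_of_le hk le_rfl⟩) y) :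
    FutureLipschitz K S n := by
  intro k m hn f hf hM hLip x y z
  obtain rfl : m = n - (k + 1) := by omega
  have hsnoc := h (k + 1) (by omega) (by omega) f hf hM hLip (Fin.snoc x y) z
  have hlast : (⟨k + 1 - 1, by omega⟩ : Fin (k + 1)) = Fin.last k := rfl
  rwa [hlast, Fin.update_snoc_last, Fin.snoc_last] at hsnoc

namespace FutureLipschitz

lemma abs_integral_sub_le (hfut : FutureLipschitz K S n) {k m : ℕ} (e : n = k + 1 + m)
    {f : (Fin m → E) → ℝ} (hf : Measurable f) {M : ℝ} (hM : ∀ u, |f u| ≤ M) {L : ℝ} (hL : 0 < L)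
    (hLip : ∀ u v, |f u - f v| ≤ L * ∑ i, dist (u i) (v i)) (x : Fin k → E) (y z : E) :
    |∫ u, f u ∂futureChain K (k + 1) (Fin.snoc x y) m -
      ∫ u, f u ∂futureChain K (k + 1) (Fin.snoc x z) m| ≤ L * (S * dist y z) := by
  have hscale : ∀ t, |L⁻¹ * t| = L⁻¹ * |t| := fun t => by
    rw [abs_mul, abs_of_pos (inv_pos.2 hL)]
  have h := hfut e (hf.const_mul L⁻¹)
    ⟨L⁻¹ * M, fun u => by
      rw [hscale]
      gcongr
      exact hM u⟩
    (fun u v => by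
      rw [← mul_sub, hscale, inv_mul_le_iff₀ hL]
      exact hLip u v) x y z
  rwa [integral_const_mul, integral_const_mul, ← mul_sub, hscale, inv_mul_le_iff₀ hL] at h

variable (hKm : ∀ i, Measurable (K i)) (hKp : ∀ i x, IsProbabilityMeasure (K i x))
include hKm hKp

/-- The integrand moves by at most `L * dist y z` and the law of the future contributes
`L * S * dist y z`. -/
lemma abs_condMean_sub_le (hfut : FutureLipschitz K S n) {F : (Fin n → E) → ℝ} (hF : Measurable F)
    {M : ℝ} (hM : ∀ x, |F x| ≤ M) {L : ℝ} (hL : 0 < L)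
    (hLip : ∀ x y, |F x - F y| ≤ L * ∑ i, dist (x i) (y i)) (k m : ℕ) (e : n = k + 1 + m)
    (x : Fin k → E) (y z : E) :
    |condMean K F e (Fin.snoc x y) - condMean K F e (Fin.snoc x z)| ≤
      L * (1 + S) * dist y z := by
  subst e
  set f : E → (Fin m → E) → ℝ := fun w u => F (Fin.append (Fin.snoc x w : Fin (k + 1) → E) u)
  set P : E → Measure (Fin m → E) := fun w => futureChain K (k + 1) (Fin.snoc x w) m
  have hP : ∀ w, IsProbabilityMeasure (P w) := fun w =>
    isProbabilityMeasure_futureChain hKm hKp (k + 1) (Fin.snoc x w) m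
  have hf : ∀ w, Measurable (f w) := fun w =>
    hF.comp ((measurable_finAppend (k + 1) m).comp measurable_prodMk_left)
  have hfi : ∀ w, Integrable (f w) (P y) := fun w =>
    integrable_of_forall_abs_le (hf w) fun u => hM _
  have hpast : |∫ u, f y u ∂P y - ∫ u, f z u ∂P y| ≤ L * dist y z := by
    rw [← integral_sub (hfi y) (hfi z)]
    refine abs_integral_le_of_forall_abs_le fun u => (hLip _ _).trans_eq ?_
    simp [Fin.sum_univ_add, Fin.sum_univ_castSucc]
  have hfuture : |∫ u, f z u ∂P y - ∫ u, f z u ∂P z| ≤ L * (S * dist y z) :=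
    hfut.abs_integral_sub_le rfl (hf z) (fun u => hM _) hL
      (fun u v => (hLip _ _).trans_eq (by simp [Fin.sum_univ_add])) x y z
  calc |∫ u, f y u ∂P y - ∫ u, f z u ∂P z|
      ≤ |∫ u, f y u ∂P y - ∫ u, f z u ∂P y| + |∫ u, f z u ∂P y - ∫ u, f z u ∂P z| :=
        abs_sub_le _ _ _
    _ ≤ L * dist y z + L * (S * dist y z) := add_le_add hpast hfuture
    _ = L * (1 + S) * dist y z := by ring

theorem subgaussianLipschitz_chainMeasure (hfut : FutureLipschitz K S n) (hS : 0 ≤ S)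
    (hK : ∀ i x, SubgaussianLipschitz dist C (K i x)) :
    SubgaussianLipschitz (fun x y => ∑ i, dist (x i) (y i)) (n * C * (1 + S) ^ 2)
      (chainMeasure K n) := by
  have := isProbabilityMeasure_chainMeasure hKm hKp n
  refine .of_pos fun F L hF ⟨M, hM⟩ hL hLip => ?_
  refine (integral_exp_chainMeasure_le hKm hKp hK (L := L * (1 + S)) (by positivity) hF hM
    (hfut.abs_condMean_sub_le hKm hKp hF hM hL hLip)).trans_eq ?_
  congr 2
  ring

end FutureLipschitz

theorem SubgaussianLipschitz.integral_exp_mul_sub_integral_le {X : Type*} [MeasurableSpace X]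
    {d : X → X → ℝ} {μ : Measure X} [IsProbabilityMeasure μ] (hμ : SubgaussianLipschitz d C μ)
    {f : X → ℝ} (hf : Measurable f) {α : ℝ} (hα : 0 ≤ α)
    (hfα : ∀ x y, |f x - f y| ≤ α * d x y) (l : ℝ) :
    ∫ x, Real.exp (l * (f x - ∫ z, f z ∂μ)) ∂μ ≤ Real.exp (C * l ^ 2 * α ^ 2 / 2) := by
  have h := hμ.integral_exp_le (hf.const_mul l) (L := |l| * α) (by positivity) fun x y => by
    rw [← mul_sub, abs_mul, mul_assoc]
    gcongr
    exact hfα x y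
  simp_rw [mul_sub, Real.exp_sub]
  rw [integral_div, div_le_iff₀ (Real.exp_pos _), ← Real.exp_add, ← integral_const_mul]
  refine h.trans_eq ?_
  rw [mul_pow, sq_abs]
  ring_nf

theorem tensorization_T1_martingale_general [OpensMeasurableSpace E] [SecondCountableTopology E]
    (hC : 0 < C) (hKm : ∀ i, Measurable (K i)) (hKp : ∀ i x, IsProbabilityMeasure (K i x))
    (hT : ∀ i x, TpIneq 1 dist C (K i x)) (hS : 0 ≤ S) (hfut : FutureLipschitz K S n) :
    (∀ (F : (Fin n → E) → ℝ) (α : ℝ),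
      (∀ x k y, |F x - F (Function.update x k y)| ≤ α * dist (x k) y) → ∀ l : ℝ,
        ∫ x, Real.exp (l * (F x - ∫ z, F z ∂chainMeasure K n)) ∂chainMeasure K n ≤
          Real.exp (C * l ^ 2 * (1 + S) ^ 2 * α ^ 2 * n / 2)) ∧
    TpIneq 1 (fun x y : Fin n → E => ∑ i, dist (x i) (y i)) (n * C * (1 + S) ^ 2)
      (chainMeasure K n) := by
  have := isProbabilityMeasure_chainMeasure hKm hKp n
  have hchain := hfut.subgaussianLipschitz_chainMeasure hKm hKp hS fun i x =>
    (hT i x).subgaussianLipschitz hC.le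
  refine ⟨fun F α hFα l => ?_, ?_⟩
  · have hF := measurable_of_abs_sub_le_sum_dist (abs_sub_le_sum_dist_of_update hFα)
    have hFα' := abs_sub_le_sum_dist_of_update (α := |α|) fun x k y =>
      (hFα x k y).trans (by gcongr; exact le_abs_self α)
    refine (hchain.integral_exp_mul_sub_integral_le hF (abs_nonneg α) hFα' l).trans_eq ?_
    rw [sq_abs]
    ring_nf
  · rcases n.eq_zero_or_pos with rfl | hn
    · exact tpIneq_one_of_cost_eq_zero (by simp) _ _
    · exact hchain.tpIneq_sum_dist (by positivity)

end Tensorization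

/-- **Theorem 2.11: tensorization of `T₁` by the McDiarmid–Rio martingale method**, under the
forward dependence condition (C1'). -/
theorem tensorization_T1_martingale
    {E : Type*} [MeasurableSpace E] [MetricSpace E] [CompleteSpace E]
    [SecondCountableTopology E] [BorelSpace E]
    (C : ℝ) (hC : 0 < C) (n : ℕ)
    (K : (i : ℕ) → (Fin i → E) → Measure E)
    (hKm : ∀ i, Measurable (K i)) (hKp : ∀ i x, IsProbabilityMeasure (K i x))
    (hT : ∀ (i : ℕ) (x : Fin i → E), TpIneq 1 dist C (K i x))
    (S : ℝ) (hS : 0 < S)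
    (hC1' : ∀ (k : ℕ) (hk : 1 ≤ k) (hkn : k ≤ n) (f : (Fin (n - k) → E) → ℝ),
      Measurable f → (∃ M : ℝ, ∀ u, |f u| ≤ M) →
      (∀ u v : Fin (n - k) → E, |f u - f v| ≤ ∑ i, dist (u i) (v i)) →
      ∀ (x : Fin k → E) (y : E),
        |(∫ u, f u ∂futureChain K k x (n - k)) -
            ∫ u, f u ∂futureChain K k (Function.update x ⟨k - 1, by omega⟩ y) (n - k)| ≤
          S * dist (x ⟨k - 1, by omega⟩) y) :
    (∀ (F : (Fin n → E) → ℝ), Measurable F → ∀ α : ℝ, 0 ≤ α →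
      (∀ (x : Fin n → E) (k : Fin n) (y : E),
        |F x - F (Function.update x k y)| ≤ α * dist (x k) y) →
      ∀ l : ℝ,
        ∫ x, Real.exp (l * (F x - ∫ z, F z ∂chainMeasure K n)) ∂chainMeasure K n ≤
          Real.exp (C * l ^ 2 * (1 + S) ^ 2 * α ^ 2 * n / 2)) ∧
    TpIneq 1 (fun x y : Fin n → E => ∑ i, dist (x i) (y i)) (n * C * (1 + S) ^ 2)
      (chainMeasure K n) := by
  have h := tensorization_T1_martingale_general hC hKm hKp hT hS.le (.of_update hC1')
  exact ⟨fun F _ α _ => h.1 F α, h.2⟩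

end
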